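/- (Barnard–Carroll–Zhu) The map B ↦ T(B) induces a bijection from the set of isomorphism classes of bricks of mod A to the set of completely join irreducible elements of the complete lattice tors A: for every brick B the torsion class T(B) is completely join irreducible, every completely join irreducible torsion class is of the form T(B) for some brick B, and T(B) = T(B') implies B ≅ B'. -/

import Mathlib

open CategoryTheory

/-- `𝒯` is a torsion class of finite-dimensional (= finitely generated) left `A`-modules:
a class of finitely generated modules, closed under isomorphism, containing `0`,
closed under quotients and closed under extensions. -/
def IsTorsionClass (A : Type) [Ring A] (𝒯 : Set (ModuleCat.{0} A)) : Prop :=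
  (∀ M ∈ 𝒯, Module.Finite A M) ∧
  (∀ M ∈ 𝒯, ∀ N : ModuleCat.{0} A, Nonempty (M ≃ₗ[A] N) → N ∈ 𝒯) ∧
  (∃ Z ∈ 𝒯, Subsingleton Z) ∧
  (∀ M ∈ 𝒯, ∀ N : ModuleCat.{0} A, ∀ f : M →ₗ[A] N, Function.Surjective f → N ∈ 𝒯) ∧
  (∀ X Y Z : ModuleCat.{0} A, X ∈ 𝒯 → Z ∈ 𝒯 →
    ∀ (f : X →ₗ[A] Y) (g : Y →ₗ[A] Z), Function.Injective f → Function.Surjective g →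
      LinearMap.range f = LinearMap.ker g → Y ∈ 𝒯)

/-- `ℱ` is a torsion-free class: closed under isomorphism, containing `0`,
closed under submodules and closed under extensions. -/
def IsTorsionFreeClass (A : Type) [Ring A] (ℱ : Set (ModuleCat.{0} A)) : Prop :=
  (∀ M ∈ ℱ, Module.Finite A M) ∧
  (∀ M ∈ ℱ, ∀ N : ModuleCat.{0} A, Nonempty (M ≃ₗ[A] N) → N ∈ ℱ) ∧
  (∃ Z ∈ ℱ, Subsingleton Z) ∧
  (∀ M ∈ ℱ, ∀ N : ModuleCat.{0} A, ∀ f : N →ₗ[A] M, Function.Injective f → N ∈ ℱ) ∧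
  (∀ X Y Z : ModuleCat.{0} A, X ∈ ℱ → Z ∈ ℱ →
    ∀ (f : X →ₗ[A] Y) (g : Y →ₗ[A] Z), Function.Injective f → Function.Surjective g →
      LinearMap.range f = LinearMap.ker g → Y ∈ ℱ)

/-- `𝒞⊥ = {Y | Hom(X,Y) = 0 for all X ∈ 𝒞}` (within finite-dimensional modules). -/
def rightPerp (A : Type) [Ring A] (𝒞 : Set (ModuleCat.{0} A)) : Set (ModuleCat.{0} A) :=
  {Y | Module.Finite A Y ∧ ∀ X ∈ 𝒞, ∀ f : X →ₗ[A] Y, f = 0}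

/-- `⊥𝒞 = {X | Hom(X,Y) = 0 for all Y ∈ 𝒞}` (within finite-dimensional modules). -/
def leftPerp (A : Type) [Ring A] (𝒞 : Set (ModuleCat.{0} A)) : Set (ModuleCat.{0} A) :=
  {X | Module.Finite A X ∧ ∀ Y ∈ 𝒞, ∀ f : X →ₗ[A] Y, f = 0}

/-- A brick: a nonzero finite-dimensional module all of whose nonzero endomorphisms
are invertible. -/
def IsBrick (A : Type) [Ring A] (B : ModuleCat.{0} A) : Prop :=
  Module.Finite A B ∧ Nontrivial B ∧ ∀ f : B →ₗ[A] B, f ≠ 0 → Function.Bijective f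

/-- `T(𝒞)`, the smallest torsion class containing `𝒞`. -/
def TgenSet (A : Type) [Ring A] (𝒞 : Set (ModuleCat.{0} A)) : Set (ModuleCat.{0} A) :=
  {X | ∀ 𝒯, IsTorsionClass A 𝒯 → 𝒞 ⊆ 𝒯 → X ∈ 𝒯}

/-- `T(B)`, the smallest torsion class containing the module `B`. -/
def Tgen (A : Type) [Ring A] (B : ModuleCat.{0} A) : Set (ModuleCat.{0} A) :=
  TgenSet A {B}

/-- `F(B)`, the smallest torsion-free class containing the module `B`. -/
def Fgen (A : Type) [Ring A] (B : ModuleCat.{0} A) : Set (ModuleCat.{0} A) :=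
  {X | ∀ ℱ, IsTorsionFreeClass A ℱ → B ∈ ℱ → X ∈ ℱ}

/-- The join of a family of torsion classes in `tors A`: the intersection of all torsion
classes containing every member of the family. -/
def torsJoin (A : Type) [Ring A] (S : Set (Set (ModuleCat.{0} A))) : Set (ModuleCat.{0} A) :=
  {M | ∀ 𝒲, IsTorsionClass A 𝒲 → (∀ 𝒯 ∈ S, 𝒯 ⊆ 𝒲) → M ∈ 𝒲}
/-- A completely join irreducible element of the lattice of torsion classes:
a torsion class `𝒥` possessing a torsion class `𝒥₊` such that, for every torsion class
`𝒴`, `𝒴 ⊊ 𝒥` if and only if `𝒴 ⊆ 𝒥₊`. -/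
def IsCJITors (A : Type) [Ring A] (𝒥 : Set (ModuleCat.{0} A)) : Prop :=
  IsTorsionClass A 𝒥 ∧ ∃ 𝒥s, IsTorsionClass A 𝒥s ∧
    ∀ 𝒴, IsTorsionClass A 𝒴 → (𝒴 ⊂ 𝒥 ↔ 𝒴 ⊆ 𝒥s)

/-!
Fix a brick `B`. The modules `M` such that every map `M → B` is zero or surjective form a torsion
class containing `B`, hence containing `T(B)`. So a torsion class `𝒴 ⊆ T(B)` either has a member
mapping onto `B`, in which case `𝒴 = T(B)`, or is contained in `⊥B`. Thus `T(B) ∩ ⊥B` is the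
largest torsion class properly contained in `T(B)`. If `T(B) = T(B')`, the same dichotomy gives
surjections `B → B'` and `B' → B`; their composite is nonzero, hence an automorphism of `B`, so
`B → B'` is also injective.

Conversely, let `𝒥_*` be the largest torsion class properly contained in `𝒥`, and let `M` be a
module of minimal length in `𝒥` but not in `𝒥_*`. All proper quotients of `M` lie in `𝒥_*`. If a
nonzero endomorphism `f` of `M` had a nonzero kernel, then `im f ≅ M / ker f` and `M / im f` would
lie in `𝒥_*`, and so would their extension `M`. Hence `f` is injective, and bijective because `M`
has finite length. So `M` is a brick, and `T(M) ⊈ 𝒥_*` forces `T(M) = 𝒥`.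
-/

theorem exists_comp_eq_of_exact {R X Y Z W : Type*} [Ring R]
    [AddCommGroup X] [AddCommGroup Y] [AddCommGroup Z] [AddCommGroup W]
    [Module R X] [Module R Y] [Module R Z] [Module R W]
    {f : X →ₗ[R] Y} {g : Y →ₗ[R] Z} (hfg : Function.Exact f g) (hg : Function.Surjective g)
    {u : Y →ₗ[R] W} (hu : u ∘ₗ f = 0) : ∃ v : Z →ₗ[R] W, v ∘ₗ g = u := by
  refine ⟨(LinearMap.range f).liftQ u (LinearMap.range_le_ker_iff.mpr hu) ∘ₗ
    (hfg.linearEquivOfSurjective hg).symm, ?_⟩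
  ext y
  simp

section TorsionClasses

variable {A : Type} [Ring A]

namespace IsTorsionClass

variable {𝒯 : Set (ModuleCat.{0} A)}

theorem finite (h𝒯 : IsTorsionClass A 𝒯) {M : ModuleCat.{0} A} (hM : M ∈ 𝒯) :
    Module.Finite A M :=
  h𝒯.1 M hM

theorem mem_of_surjective (h𝒯 : IsTorsionClass A 𝒯) {M N : ModuleCat.{0} A} (hM : M ∈ 𝒯)
    (f : M →ₗ[A] N) (hf : Function.Surjective f) : N ∈ 𝒯 :=
  h𝒯.2.2.2.1 M hM N f hf

theorem mem_of_exact (h𝒯 : IsTorsionClass A 𝒯) {X Y Z : ModuleCat.{0} A} (hX : X ∈ 𝒯)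
    (hZ : Z ∈ 𝒯) {f : X →ₗ[A] Y} {g : Y →ₗ[A] Z} (hf : Function.Injective f)
    (hg : Function.Surjective g) (hfg : Function.Exact f g) : Y ∈ 𝒯 :=
  h𝒯.2.2.2.2 X Y Z hX hZ f g hf hg hfg.linearMap_ker_eq.symm

theorem mem_of_subsingleton (h𝒯 : IsTorsionClass A 𝒯) (M : ModuleCat.{0} A) [Subsingleton M] :
    M ∈ 𝒯 := by
  obtain ⟨Z, hZ, -⟩ := h𝒯.2.2.1
  exact h𝒯.mem_of_surjective hZ 0 (Function.surjective_to_subsingleton _)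

theorem mem_of_submodule_of_quotient (h𝒯 : IsTorsionClass A 𝒯) {M : ModuleCat.{0} A}
    (N : Submodule A M) (hN : ModuleCat.of A N ∈ 𝒯) (hQ : ModuleCat.of A (M ⧸ N) ∈ 𝒯) : M ∈ 𝒯 :=
  h𝒯.mem_of_exact hN hQ N.injective_subtype N.mkQ_surjective (LinearMap.exact_subtype_mkQ N)

theorem of_surjective_of_exact (hfin : ∀ M ∈ 𝒯, Module.Finite A M) (hne : 𝒯.Nonempty)
    (hquot : ∀ M ∈ 𝒯, ∀ (N : ModuleCat.{0} A) (f : M →ₗ[A] N), Function.Surjective f → N ∈ 𝒯)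
    (hext : ∀ X Y Z : ModuleCat.{0} A, X ∈ 𝒯 → Z ∈ 𝒯 → ∀ (f : X →ₗ[A] Y) (g : Y →ₗ[A] Z),
      Function.Injective f → Function.Surjective g → Function.Exact f g → Y ∈ 𝒯) :
    IsTorsionClass A 𝒯 := by
  refine ⟨hfin, fun M hM N ⟨e⟩ => hquot M hM N e.toLinearMap e.surjective, ?_, hquot,
    fun X Y Z hX hZ f g hf hg hfg =>
      hext X Y Z hX hZ f g hf hg (LinearMap.exact_iff.mpr hfg.symm)⟩
  obtain ⟨M, hM⟩ := hne
  exact ⟨ModuleCat.of A PUnit, hquot M hM _ 0 (Function.surjective_to_subsingleton _),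
    inferInstanceAs (Subsingleton PUnit)⟩

theorem sInter {S : Set (Set (ModuleCat.{0} A))} (hS : S.Nonempty)
    (hS𝒯 : ∀ 𝒯 ∈ S, IsTorsionClass A 𝒯) : IsTorsionClass A (⋂₀ S) := by
  obtain ⟨𝒯₀, h𝒯₀⟩ := hS
  refine of_surjective_of_exact (fun M hM => (hS𝒯 𝒯₀ h𝒯₀).finite (hM 𝒯₀ h𝒯₀))
    ⟨ModuleCat.of A PUnit, fun 𝒯 h𝒯 => ?_⟩
    (fun M hM N f hf 𝒯 h𝒯 => (hS𝒯 𝒯 h𝒯).mem_of_surjective (hM 𝒯 h𝒯) f hf)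
    (fun X Y Z hX hZ f g hf hg hfg 𝒯 h𝒯 =>
      (hS𝒯 𝒯 h𝒯).mem_of_exact (hX 𝒯 h𝒯) (hZ 𝒯 h𝒯) hf hg hfg)
  have : Subsingleton (ModuleCat.of A PUnit) := inferInstanceAs (Subsingleton PUnit)
  exact (hS𝒯 𝒯 h𝒯).mem_of_subsingleton _

theorem inter {𝒯' : Set (ModuleCat.{0} A)} (h𝒯 : IsTorsionClass A 𝒯)
    (h𝒯' : IsTorsionClass A 𝒯') : IsTorsionClass A (𝒯 ∩ 𝒯') := by
  rw [← Set.sInter_pair]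
  exact sInter (Set.insert_nonempty _ _) (by rintro _ (rfl | rfl) <;> assumption)

end IsTorsionClass

/-- Since `V Y` is closed under enlarging submodules, a map out of an extension whose restriction
to the submodule is nonzero has its image in `V Y`; any other map factors through the quotient. -/
theorem isTorsionClass_setOf_eq_zero_or_range_mem (𝒞 : Set (ModuleCat.{0} A))
    (V : ∀ Y : ModuleCat.{0} A, Set (Submodule A Y)) (hV : ∀ Y, IsUpperSet (V Y)) :
    IsTorsionClass A {M | Module.Finite A M ∧
      ∀ Y ∈ 𝒞, ∀ u : M →ₗ[A] Y, u = 0 ∨ LinearMap.range u ∈ V Y} := by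
  refine .of_surjective_of_exact (fun M hM => hM.1)
    ⟨ModuleCat.of A PUnit, inferInstanceAs (Module.Finite A PUnit), fun Y _ u => .inl ?_⟩ ?_ ?_
  · exact LinearMap.ext fun x => (congrArg u (Subsingleton.elim (α := PUnit) x 0)).trans u.map_zero
  · rintro M ⟨hfin, hM⟩ N f hf
    refine ⟨.of_surjective f hf, fun Y hY u => ?_⟩
    rw [← LinearMap.range_comp_of_range_eq_top u (LinearMap.range_eq_top.mpr hf)]
    exact (hM Y hY (u ∘ₗ f)).imp_left fun h => (LinearMap.cancel_right hf).mp h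
  · rintro X Y Z ⟨hXfin, hX⟩ ⟨hZfin, hZ⟩ f g - hg hfg
    refine ⟨.of_exact hfg hg, fun W hW u => ?_⟩
    obtain huf | huf := hX W hW (u ∘ₗ f)
    · obtain ⟨v, rfl⟩ := exists_comp_eq_of_exact hfg hg huf
      rw [LinearMap.range_comp_of_range_eq_top v (LinearMap.range_eq_top.mpr hg)]
      exact (hZ W hW v).imp_left fun hv => by rw [hv, LinearMap.zero_comp]
    · exact .inr (hV W (LinearMap.range_comp_le_range f u) huf)

theorem isTorsionClass_setOf_finite : IsTorsionClass A {M | Module.Finite A M} := by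
  simpa using isTorsionClass_setOf_eq_zero_or_range_mem (A := A) ∅ (fun _ => ∅)
    fun _ => isUpperSet_empty

theorem isTorsionClass_leftPerp (𝒞 : Set (ModuleCat.{0} A)) :
    IsTorsionClass A (leftPerp A 𝒞) := by
  simpa [leftPerp] using
    isTorsionClass_setOf_eq_zero_or_range_mem 𝒞 (fun _ => ∅) fun _ => isUpperSet_empty

theorem isTorsionClass_setOf_eq_zero_or_surjective (𝒞 : Set (ModuleCat.{0} A)) :
    IsTorsionClass A {M | Module.Finite A M ∧
      ∀ Y ∈ 𝒞, ∀ u : M →ₗ[A] Y, u = 0 ∨ Function.Surjective u} := by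
  simpa [LinearMap.range_eq_top] using
    isTorsionClass_setOf_eq_zero_or_range_mem 𝒞 (fun _ => Set.Ici ⊤) fun _ => isUpperSet_Ici _

theorem isTorsionClass_TgenSet {𝒞 : Set (ModuleCat.{0} A)} (h𝒞 : ∀ M ∈ 𝒞, Module.Finite A M) :
    IsTorsionClass A (TgenSet A 𝒞) := by
  have h : TgenSet A 𝒞 = ⋂₀ {𝒯 | IsTorsionClass A 𝒯 ∧ 𝒞 ⊆ 𝒯} := by
    ext M
    simp only [TgenSet, Set.mem_ofPred_eq, Set.mem_sInter, and_imp]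
  rw [h]
  exact .sInter ⟨_, isTorsionClass_setOf_finite, h𝒞⟩ fun 𝒯 h𝒯 => h𝒯.1

theorem isTorsionClass_Tgen (M : ModuleCat.{0} A) [Module.Finite A M] :
    IsTorsionClass A (Tgen A M) :=
  isTorsionClass_TgenSet fun _ hN => Set.mem_singleton_iff.mp hN ▸ inferInstance

theorem mem_Tgen_self (M : ModuleCat.{0} A) : M ∈ Tgen A M :=
  fun _ _ hM => hM rfl

theorem IsTorsionClass.Tgen_subset {𝒯 : Set (ModuleCat.{0} A)} (h𝒯 : IsTorsionClass A 𝒯)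
    {M : ModuleCat.{0} A} (hM : M ∈ 𝒯) : Tgen A M ⊆ 𝒯 :=
  fun _ hN => hN 𝒯 h𝒯 (Set.singleton_subset_iff.mpr hM)

theorem notMem_leftPerp_singleton_self (M : ModuleCat.{0} A) [Nontrivial M] :
    M ∉ leftPerp A {M} :=
  fun hM => one_ne_zero (hM.2 M rfl (1 : Module.End A M))

theorem exists_ne_zero_of_mem_Tgen {M N : ModuleCat.{0} A} [Module.Finite A M] [Nontrivial N]
    (hN : N ∈ Tgen A M) : ∃ f : M →ₗ[A] N, f ≠ 0 := by
  by_contra! hzero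
  have hM : M ∈ leftPerp A {N} := ⟨inferInstance, by rintro _ rfl; exact hzero⟩
  exact notMem_leftPerp_singleton_self N ((isTorsionClass_leftPerp {N}).Tgen_subset hM hN)

namespace IsBrick

variable {B : ModuleCat.{0} A}

theorem eq_zero_or_surjective_of_mem_Tgen (hB : IsBrick A B) {M : ModuleCat.{0} A}
    (hM : M ∈ Tgen A B) (u : M →ₗ[A] B) : u = 0 ∨ Function.Surjective u := by
  obtain ⟨hfin, -, hbij⟩ := hB
  refine ((isTorsionClass_setOf_eq_zero_or_surjective {B}).Tgen_subset ⟨hfin, ?_⟩ hM).2 B rfl u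
  rintro _ rfl v
  exact or_iff_not_imp_left.mpr fun hv => (hbij v hv).surjective

theorem ssubset_Tgen_iff (hB : IsBrick A B) {𝒴 : Set (ModuleCat.{0} A)}
    (h𝒴 : IsTorsionClass A 𝒴) : 𝒴 ⊂ Tgen A B ↔ 𝒴 ⊆ Tgen A B ∩ leftPerp A {B} := by
  have : Nontrivial B := hB.2.1
  refine ⟨fun hlt M hM => ⟨hlt.subset hM, h𝒴.finite hM, ?_⟩,
    fun hle => ⟨fun _ hM => (hle hM).1, fun hge => ?_⟩⟩
  · rintro _ rfl u
    refine (hB.eq_zero_or_surjective_of_mem_Tgen (hlt.subset hM) u).resolve_right fun hu => ?_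
    exact hlt.not_subset (h𝒴.Tgen_subset (h𝒴.mem_of_surjective hM u hu))
  · exact notMem_leftPerp_singleton_self B (hle (hge (mem_Tgen_self B))).2

theorem isCJITors_Tgen (hB : IsBrick A B) : IsCJITors A (Tgen A B) :=
  have : Module.Finite A B := hB.1
  ⟨isTorsionClass_Tgen B, Tgen A B ∩ leftPerp A {B},
    (isTorsionClass_Tgen B).inter (isTorsionClass_leftPerp {B}), fun _ => hB.ssubset_Tgen_iff⟩

theorem exists_surjective_of_mem_Tgen (hB : IsBrick A B) {M : ModuleCat.{0} A}
    [Module.Finite A M] (hM : M ∈ Tgen A B) (hBM : B ∈ Tgen A M) :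
    ∃ f : M →ₗ[A] B, Function.Surjective f := by
  have : Nontrivial B := hB.2.1
  obtain ⟨f, hf⟩ := exists_ne_zero_of_mem_Tgen hBM
  exact ⟨f, (hB.eq_zero_or_surjective_of_mem_Tgen hM f).resolve_left hf⟩

theorem nonempty_linearEquiv_of_Tgen_eq {B' : ModuleCat.{0} A} (hB : IsBrick A B)
    (hB' : IsBrick A B') (h : Tgen A B = Tgen A B') : Nonempty (B ≃ₗ[A] B') := by
  have : Module.Finite A B := hB.1
  have : Nontrivial B := hB.2.1
  have : Module.Finite A B' := hB'.1
  have hBB' : B ∈ Tgen A B' := h ▸ mem_Tgen_self B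
  have hB'B : B' ∈ Tgen A B := h ▸ mem_Tgen_self B'
  obtain ⟨f, hf⟩ := hB'.exists_surjective_of_mem_Tgen hBB' hB'B
  obtain ⟨g, hg⟩ := hB.exists_surjective_of_mem_Tgen hB'B hBB'
  have hgf : g ∘ₗ f ≠ 0 := by
    intro h0
    have htop : LinearMap.range (g ∘ₗ f) = ⊤ := LinearMap.range_eq_top.mpr (hg.comp hf)
    exact bot_ne_top ((LinearMap.range_eq_bot.mpr h0).symm.trans htop)
  have hinj : Function.Injective f := .of_comp (f := g) (hB.2.2 _ hgf).injective
  exact ⟨.ofBijective f ⟨hinj, hf⟩⟩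

end IsBrick

theorem IsTorsionClass.isBrick_of_quotient_mem {𝒯 : Set (ModuleCat.{0} A)}
    (h𝒯 : IsTorsionClass A 𝒯) {M : ModuleCat.{0} A} [Module.Finite A M] [IsArtinian A M]
    (hM : M ∉ 𝒯) (hquot : ∀ N : Submodule A M, N ≠ ⊥ → ModuleCat.of A (M ⧸ N) ∈ 𝒯) :
    IsBrick A M := by
  have hnontrivial : Nontrivial M := by
    by_contra hsub
    rw [not_nontrivial_iff_subsingleton] at hsub
    exact hM (h𝒯.mem_of_subsingleton M)
  refine ⟨inferInstance, hnontrivial, fun f hf => ?_⟩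
  suffices hker : LinearMap.ker f = ⊥ from
    IsArtinian.bijective_of_injective_endomorphism f (LinearMap.ker_eq_bot.mp hker)
  by_contra hker
  have hrange : ModuleCat.of A (LinearMap.range f) ∈ 𝒯 :=
    h𝒯.mem_of_surjective (hquot _ hker) f.quotKerEquivRange.toLinearMap
      f.quotKerEquivRange.surjective
  have hcoker : ModuleCat.of A (M ⧸ LinearMap.range f) ∈ 𝒯 :=
    hquot _ (LinearMap.range_eq_bot.not.mpr hf)
  exact hM (h𝒯.mem_of_submodule_of_quotient _ hrange hcoker)

theorem IsTorsionClass.exists_isBrick_mem_diff [IsArtinianRing A]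
    {𝒥 𝒯 : Set (ModuleCat.{0} A)} (h𝒥 : IsTorsionClass A 𝒥) (h𝒯 : IsTorsionClass A 𝒯)
    (h : ¬𝒥 ⊆ 𝒯) : ∃ B ∈ 𝒥 \ 𝒯, IsBrick A B := by
  obtain ⟨M, hM, hmin⟩ := exists_minimalFor_of_wellFoundedLT (· ∈ 𝒥 \ 𝒯)
    (fun M : ModuleCat.{0} A => Module.length A M) (Set.sdiff_nonempty.mpr h)
  have : Module.Finite A M := h𝒥.finite hM.1
  refine ⟨M, hM, h𝒯.isBrick_of_quotient_mem hM.2 fun N hN => ?_⟩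
  by_contra hquot
  have hmem : ModuleCat.of A (M ⧸ N) ∈ 𝒥 :=
    h𝒥.mem_of_surjective hM.1 N.mkQ N.mkQ_surjective
  have hlt : Module.length A (M ⧸ N) < Module.length A M := N.length_quotient_lt hN
  exact hlt.not_ge (hmin ⟨hmem, hquot⟩ hlt.le)

theorem IsCJITors.exists_isBrick_eq_Tgen [IsArtinianRing A] {𝒥 : Set (ModuleCat.{0} A)}
    (h : IsCJITors A 𝒥) : ∃ B, IsBrick A B ∧ 𝒥 = Tgen A B := by
  obtain ⟨h𝒥, 𝒥s, h𝒥s, hlt_iff⟩ := h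
  have hnle : ¬𝒥 ⊆ 𝒥s := fun hle => ((hlt_iff 𝒥 h𝒥).mpr hle).ne rfl
  obtain ⟨B, ⟨hB𝒥, hB𝒥s⟩, hB⟩ := h𝒥.exists_isBrick_mem_diff h𝒥s hnle
  have : Module.Finite A B := hB.1
  refine ⟨B, hB, by_contra fun hne => hB𝒥s ?_⟩
  have hlt : Tgen A B ⊂ 𝒥 := (h𝒥.Tgen_subset hB𝒥).ssubset_of_ne (Ne.symm hne)
  exact (hlt_iff _ (isTorsionClass_Tgen B)).mp hlt (mem_Tgen_self B)

end TorsionClasses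

theorem bricks_biject_with_cji_torsionClasses_general
    (A : Type) [Ring A] [IsArtinianRing A] :
    (∀ B, IsBrick A B → IsCJITors A (Tgen A B)) ∧
    (∀ 𝒥, IsCJITors A 𝒥 → ∃ B, IsBrick A B ∧ 𝒥 = Tgen A B) ∧
    (∀ B B', IsBrick A B → IsBrick A B' → Tgen A B = Tgen A B' →
      Nonempty (B ≃ₗ[A] B')) :=
  ⟨fun _ hB => hB.isCJITors_Tgen, fun _ h𝒥 => h𝒥.exists_isBrick_eq_Tgen,
    fun _ _ hB hB' h => hB.nonempty_linearEquiv_of_Tgen_eq hB' h⟩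

theorem bricks_biject_with_cji_torsionClasses
    (k A : Type) [Field k] [Ring A] [Algebra k A] [FiniteDimensional k A] :
    (∀ B, IsBrick A B → IsCJITors A (Tgen A B)) ∧
    (∀ 𝒥, IsCJITors A 𝒥 → ∃ B, IsBrick A B ∧ 𝒥 = Tgen A B) ∧
    (∀ B B', IsBrick A B → IsBrick A B' → Tgen A B = Tgen A B' →
      Nonempty (B ≃ₗ[A] B')) :=
  have : IsArtinianRing A := .of_finite k A
  bricks_biject_with_cji_torsionClasses_general A
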